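/- arXiv:2410.06029 — 2 statements merged into one kernel-verified Lean document; each statement's English description precedes it below -/
import Mathlib

section
/- (Perfect security of the quantum one-time pad.) For every n ∈ ℕ and every 2ⁿ×2ⁿ complex matrix ρ, (1/4ⁿ) · Σ_{a,b ∈ {0,1}ⁿ} X^a Z^b ρ (X^a Z^b)† = (tr ρ / 2ⁿ) · I_{2ⁿ}. In particular, when ρ is a density matrix, the quantum one-time pad with uniformly random keys (a,b) maps ρ to the maximally mixed state I_{2ⁿ}/2ⁿ, independently of ρ. -/
open Matrix BigOperators

/-- The `n`-qubit Pauli X operator `X^a` for a bit string `a ∈ {0,1}ⁿ`: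
`(X^a)_{x,y} = 1` if `x = y ⊕ a` (bitwise XOR) and `0` otherwise. -/
def PauliX {n : ℕ} (a : Fin n → Bool) :
    Matrix (Fin n → Bool) (Fin n → Bool) ℂ :=
  fun x y => if x = (fun i => xor (y i) (a i)) then 1 else 0

/-- The `n`-qubit Pauli Z operator `Z^b` for a bit string `b ∈ {0,1}ⁿ`:
the diagonal matrix with `(Z^b)_{x,x} = (−1)^{Σᵢ bᵢ·xᵢ}`. -/
def PauliZ {n : ℕ} (b : Fin n → Bool) :
    Matrix (Fin n → Bool) (Fin n → Bool) ℂ :=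
  fun x y => if x = y then (-1 : ℂ) ^ (∑ i, if b i ∧ x i then (1 : ℕ) else 0) else 0

def qS {n : ℕ} (b x : Fin n → Bool) : ℂ := ∏ i, if b i ∧ x i then (-1 : ℂ) else 1

def qxor {n : ℕ} (x a : Fin n → Bool) : Fin n → Bool := fun i => xor (x i) (a i)

lemma qxor_iff {n : ℕ} (x y a : Fin n → Bool) :
    x = (fun i => xor (y i) (a i)) ↔ y = qxor x a := by
  constructor
  · rintro rfl; funext i; simp [qxor]
  · rintro rfl; funext i; simp [qxor]

lemma qXZ {n : ℕ} (a b x y : Fin n → Bool) :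
    (PauliX a * PauliZ b) x y = if y = qxor x a then qS b y else 0 := by
  have h : (-1 : ℂ) ^ (∑ i, if b i ∧ y i then (1 : ℕ) else 0) = qS b y := by
    rw [← Finset.prod_pow_eq_pow_sum, qS]
    refine Finset.prod_congr rfl fun i _ => ?_
    split_ifs <;> simp
  rw [Matrix.mul_apply, Finset.sum_eq_single y]
  · simp only [PauliX, PauliZ, qxor_iff, if_true, h]
    split_ifs <;> simp
  · intro z _ hz
    simp [PauliZ, hz]
  · simp

lemma qS_star {n : ℕ} (b x : Fin n → Bool) : star (qS b x) = qS b x := by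
  rw [qS, star_prod]
  refine Finset.prod_congr rfl fun i _ => ?_
  split_ifs <;> simp

lemma qS_sum {n : ℕ} (u v : Fin n → Bool) :
    ∑ b : Fin n → Bool, qS b u * qS b v = if u = v then 2 ^ n else 0 := by
  have h : ∀ b : Fin n → Bool, qS b u * qS b v = ∏ i,
      ((fun i (c : Bool) => (if c ∧ u i then (-1 : ℂ) else 1) * (if c ∧ v i then (-1 : ℂ) else 1))
        i (b i)) := by
    intro b; simp only [qS, Finset.prod_mul_distrib]
  rw [Finset.sum_congr rfl fun b _ => h b]
  refine (Fintype.prod_sum (fun (i : Fin n) (c : Bool) =>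
    (if c ∧ u i then (-1 : ℂ) else 1) * (if c ∧ v i then (-1 : ℂ) else 1))).symm.trans ?_
  have h2 : ∀ i, (∑ c : Bool, (if c ∧ u i then (-1 : ℂ) else 1) * (if c ∧ v i then (-1 : ℂ) else 1))
      = if u i = v i then 2 else 0 := by
    intro i
    cases u i <;> cases v i <;> norm_num
  simp_rw [h2]
  split_ifs with huv
  · subst huv; simp
  · obtain ⟨i, hi⟩ := Function.ne_iff.mp huv
    exact Finset.prod_eq_zero (Finset.mem_univ i) (by simp [hi])

lemma qConj {n : ℕ} (a b x y : Fin n → Bool) (ρ : Matrix (Fin n → Bool) (Fin n → Bool) ℂ) :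
    ((PauliX a * PauliZ b) * ρ * (PauliX a * PauliZ b)ᴴ) x y =
      (qS b (qxor x a) * qS b (qxor y a)) * ρ (qxor x a) (qxor y a) := by
  rw [Matrix.mul_apply, Finset.sum_eq_single (qxor y a)]
  · rw [Matrix.mul_apply, Finset.sum_eq_single (qxor x a)]
    · rw [Matrix.conjTranspose_apply, qXZ, qXZ, if_pos rfl, if_pos rfl, qS_star]
      ring
    · intro z _ hz
      rw [qXZ, if_neg hz, zero_mul]
    · simp
  · intro z _ hz
    rw [Matrix.conjTranspose_apply, qXZ, if_neg hz, star_zero, mul_zero]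
  · simp

/-- Perfect security of the quantum one-time pad: averaging the pad
`ρ ↦ X^a Z^b ρ (X^a Z^b)†` over uniformly random keys `(a,b)` yields
`(tr ρ / 2ⁿ) · I`, independently of `ρ`. -/
theorem qotp_perfect_security (n : ℕ)
    (ρ : Matrix (Fin n → Bool) (Fin n → Bool) ℂ) :
    ((1 : ℂ) / 4 ^ n) •
        ∑ a : Fin n → Bool, ∑ b : Fin n → Bool,
          (PauliX a * PauliZ b) * ρ * (PauliX a * PauliZ b)ᴴ =
      (ρ.trace / 2 ^ n) • (1 : Matrix (Fin n → Bool) (Fin n → Bool) ℂ) := by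
  ext x y
  simp only [Matrix.smul_apply, Matrix.sum_apply, qConj, ← Finset.sum_mul, qS_sum, smul_eq_mul,
    Matrix.one_apply]
  by_cases hxy : x = y
  · subst hxy
    have hinj : ∀ u : Fin n → Bool, qxor x (qxor x u) = u := by
      intro u; funext i; simp [qxor]
    have ht : ∑ a, ρ (qxor x a) (qxor x a) = ρ.trace :=
      Equiv.sum_comp (⟨qxor x, qxor x, hinj, hinj⟩ : (Fin n → Bool) ≃ (Fin n → Bool))
        (fun u => ρ u u)
    simp only [if_true, ← Finset.mul_sum, ht]
    rw [show (4 : ℂ) = 2 * 2 by norm_num, mul_pow]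
    field_simp
  · have hne : ∀ a, qxor x a ≠ qxor y a := by
      intro a h
      apply hxy
      funext i
      have := congrFun h i
      simpa [qxor] using this
    simp [hne, hxy]
end

section
/- (Correctness of quantum teleportation.) Let |Φ⁺⟩ ∈ ℂ²⊗ℂ² be the EPR vector with coordinates 1/√2 at (0,0) and (1,1) and 0 elsewhere, and for a,b ∈ {0,1} let |Φ_{ab}⟩ := (X^a Z^b ⊗ I₂)|Φ⁺⟩ be the Bell vectors, with X = !![0,1;1,0] and Z = !![1,0;0,−1]. Then for every vector |ψ⟩ ∈ ℂ² and all a,b ∈ {0,1}: (⟨Φ_{ab}| ⊗ I₂)(|ψ⟩ ⊗ |Φ⁺⟩) = (1/2) · Z^b X^a |ψ⟩ as vectors in ℂ² (where ⟨Φ_{ab}| ⊗ I₂ contracts the first two of the three qubit factors). Consequently the squared norm of the projected vector is ‖ψ‖²/4, i.e. each Bell-measurement outcome (a,b) occurs with probability 1/4, and applying the Pauli correction X^a Z^b to the receiver's qubit yields (1/2)|ψ⟩, recovering the teleported state up to normalization. -/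
open Matrix BigOperators Kronecker

/-- The single-qubit Pauli X matrix. -/
def qX : Matrix (Fin 2) (Fin 2) ℂ := !![0, 1; 1, 0]

/-- The single-qubit Pauli Z matrix. -/
def qZ : Matrix (Fin 2) (Fin 2) ℂ := !![1, 0; 0, -1]

/-- `X^a` for a bit `a ∈ {0,1}`. -/
def qXpow (a : Bool) : Matrix (Fin 2) (Fin 2) ℂ := if a then qX else 1

/-- `Z^b` for a bit `b ∈ {0,1}`. -/
def qZpow (b : Bool) : Matrix (Fin 2) (Fin 2) ℂ := if b then qZ else 1

/-- The EPR vector `|Φ⁺⟩ ∈ ℂ²⊗ℂ²`: coordinates `1/√2` at `(0,0)` and `(1,1)`,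
`0` elsewhere. -/
noncomputable def eprVec : Fin 2 × Fin 2 → ℂ :=
  fun p => if p.1 = p.2 then ((1 / Real.sqrt 2 : ℝ) : ℂ) else 0

/-- The Bell vector `|Φ_{ab}⟩ := (X^a Z^b ⊗ I₂)|Φ⁺⟩`. -/
noncomputable def bellVec (a b : Bool) : Fin 2 × Fin 2 → ℂ :=
  ((qXpow a * qZpow b) ⊗ₖ (1 : Matrix (Fin 2) (Fin 2) ℂ)).mulVec eprVec

/-- The contraction `(⟨Φ_{ab}| ⊗ I₂) v` of a three-qubit vector `v` against the
Bell vector `|Φ_{ab}⟩` on the first two qubit factors: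
`k ↦ Σ_{i,j} conj(Φ_{ab})_{(i,j)} · v_{(i,j,k)}`. -/
noncomputable def bellContract (a b : Bool) (v : Fin 2 × Fin 2 × Fin 2 → ℂ) :
    Fin 2 → ℂ :=
  fun k => ∑ i : Fin 2, ∑ j : Fin 2, (starRingEnd ℂ) (bellVec a b (i, j)) * v (i, j, k)

/-- Correctness of quantum teleportation: projecting `|ψ⟩ ⊗ |Φ⁺⟩` onto the Bell
vector `|Φ_{ab}⟩` on the first two qubits leaves `(1/2)·Z^b X^a |ψ⟩` on the third
qubit; each outcome `(a,b)` occurs with probability `1/4` (the squared norm of the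
projected vector is `‖ψ‖²/4`); and applying the Pauli correction `X^a Z^b`
recovers `(1/2)|ψ⟩`. -/
theorem teleportation_correct (ψ : Fin 2 → ℂ) (a b : Bool) :
    bellContract a b (fun p => ψ p.1 * eprVec p.2) =
        ((1 : ℂ) / 2) • (qZpow b * qXpow a).mulVec ψ ∧
      (∑ k : Fin 2, Complex.normSq (bellContract a b (fun p => ψ p.1 * eprVec p.2) k)) =
        (∑ i : Fin 2, Complex.normSq (ψ i)) / 4 ∧
      (qXpow a * qZpow b).mulVec (((1 : ℂ) / 2) • (qZpow b * qXpow a).mulVec ψ) =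
        ((1 : ℂ) / 2) • ψ := by
  have hs : ((Real.sqrt 2 : ℝ) : ℂ)⁻¹ * ((Real.sqrt 2 : ℝ) : ℂ)⁻¹ = 1 / 2 := by
    rw [← mul_inv, ← Complex.ofReal_mul, Real.mul_self_sqrt (by norm_num)]
    norm_num
  have h1 : bellContract a b (fun p => ψ p.1 * eprVec p.2) =
        ((1 : ℂ) / 2) • (qZpow b * qXpow a).mulVec ψ := by
    funext k
    cases a <;> cases b <;> fin_cases k <;>
      simp [bellContract, bellVec, eprVec, qXpow, qZpow, qX, qZ, Matrix.mulVec, dotProduct,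
        Fintype.sum_prod_type, Matrix.one_apply, Matrix.mul_apply] <;>
      first | linear_combination (ψ 0) * hs | linear_combination (ψ 1) * hs | linear_combination (-ψ 0) * hs | linear_combination (-ψ 1) * hs
  refine ⟨h1, ?_, ?_⟩
  · rw [h1]
    cases a <;> cases b <;>
      simp [qXpow, qZpow, qX, qZ, Matrix.mulVec, dotProduct, Matrix.one_apply,
        Matrix.mul_apply] <;> ring
  · funext k
    cases a <;> cases b <;> fin_cases k <;>
      simp [qXpow, qZpow, qX, qZ, Matrix.mulVec, dotProduct, Matrix.one_apply,
        Matrix.mul_apply]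
end
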